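/- Define p : ℕ → ℝ by p(1) = 3/4, p(2) = 1/2, and p(n+2) = (3/4) p(n+1) - (1/16) p(n). Then (1/n) * log(p(n)) converges to log((3+√5)/8) as n tends to infinity. -/

import Mathlib

/-!
A second-order recurrence whose characteristic polynomial is `(X - a) * (X - b)` factors into two
first-order ones: `u (n + 1) - b * u n` is geometric with ratio `a`, and symmetrically in `a`, `b`.
Subtracting the two solves the recurrence. When `‖b‖ < ‖a‖` the dominant root wins, so `u n / a ^ n`
has a limit; if this limit is nonzero, taking logarithms gives growth rate `log a`.
-/

open Filter Topology

section Recurrence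

variable {R : Type*} [CommRing R] {a b : R} {u : ℕ → R}

theorem sub_mul_eq_pow_mul_of_recurrence
    (hrec : ∀ n, u (n + 2) = (a + b) * u (n + 1) - a * b * u n) (n : ℕ) :
    u (n + 1) - b * u n = a ^ n * (u 1 - b * u 0) := by
  induction n with
  | zero => simp
  | succ n ih =>
    calc u (n + 2) - b * u (n + 1) = a * (u (n + 1) - b * u n) := by rw [hrec]; ring
      _ = a ^ (n + 1) * (u 1 - b * u 0) := by rw [ih]; ring

theorem binet_of_recurrence
    (hrec : ∀ n, u (n + 2) = (a + b) * u (n + 1) - a * b * u n) (n : ℕ) :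
    (a - b) * u n = (u 1 - b * u 0) * a ^ n - (u 1 - a * u 0) * b ^ n := by
  have hrec_swap : ∀ n, u (n + 2) = (b + a) * u (n + 1) - b * a * u n := fun n ↦ by
    rw [hrec, add_comm b a, mul_comm b a]
  linear_combination sub_mul_eq_pow_mul_of_recurrence hrec n -
    sub_mul_eq_pow_mul_of_recurrence hrec_swap n

end Recurrence

section DominantRoot

variable {𝕜 : Type*} [NormedField 𝕜] {a b : 𝕜} {u : ℕ → 𝕜}

theorem tendsto_div_pow_of_recurrence (hba : ‖b‖ < ‖a‖)
    (hrec : ∀ n, u (n + 2) = (a + b) * u (n + 1) - a * b * u n) :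
    Tendsto (fun n ↦ u n / a ^ n) atTop (𝓝 ((u 1 - b * u 0) / (a - b))) := by
  have ha : a ≠ 0 := norm_pos_iff.mp ((norm_nonneg b).trans_lt hba)
  have hab : a - b ≠ 0 := sub_ne_zero.mpr fun h ↦ hba.ne (by rw [h])
  have hratio : ‖b / a‖ < 1 := by
    rw [norm_div]
    exact (div_lt_one (norm_pos_iff.mpr ha)).mpr hba
  have hsolution (n : ℕ) :
      u n / a ^ n = ((u 1 - b * u 0) - (u 1 - a * u 0) * (b / a) ^ n) / (a - b) := by
    rw [div_pow]
    field_simp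
    linear_combination binet_of_recurrence hrec n
  simp_rw [hsolution]
  simpa using (((tendsto_pow_atTop_nhds_zero_of_norm_lt_one hratio).const_mul
    (u 1 - a * u 0)).const_sub (u 1 - b * u 0)).div_const (a - b)

end DominantRoot

section LogGrowth

variable {a b : ℝ} {u : ℕ → ℝ}

-- No signs need be controlled, since `Real.log x` is `log |x|`.
theorem tendsto_log_div_of_tendsto_div_pow {c : ℝ} (ha : a ≠ 0) (hc : c ≠ 0)
    (hu : Tendsto (fun n ↦ u n / a ^ n) atTop (𝓝 c)) :
    Tendsto (fun n : ℕ ↦ 1 / (n : ℝ) * Real.log (u n)) atTop (𝓝 (Real.log a)) := by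
  have hlim : Tendsto (fun n : ℕ ↦ 1 / (n : ℝ) * Real.log (u n / a ^ n) + Real.log a) atTop
      (𝓝 (Real.log a)) := by
    simpa using (tendsto_one_div_atTop_nhds_zero_nat.mul (hu.log hc)).add_const (Real.log a)
  refine hlim.congr' ?_
  filter_upwards [hu.eventually_ne hc, eventually_ne_atTop 0] with n hquot hn
  have hun : u n ≠ 0 := (div_ne_zero_iff.mp hquot).1
  rw [Real.log_div hun (pow_ne_zero n ha), Real.log_pow]
  field_simp
  ring

theorem tendsto_log_div_of_recurrence {N : ℕ} (hba : |b| < |a|)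
    (hrec : ∀ n, N ≤ n → u (n + 2) = (a + b) * u (n + 1) - a * b * u n)
    (hinit : u (N + 1) ≠ b * u N) :
    Tendsto (fun n : ℕ ↦ 1 / (n : ℝ) * Real.log (u n)) atTop (𝓝 (Real.log a)) := by
  have ha : a ≠ 0 := abs_pos.mp ((abs_nonneg b).trans_lt hba)
  have hab : a - b ≠ 0 := sub_ne_zero.mpr fun h ↦ hba.ne (by rw [h])
  have hshift : Tendsto (fun n ↦ u (n + N) / a ^ n) atTop
      (𝓝 ((u (1 + N) - b * u (0 + N)) / (a - b))) :=
    tendsto_div_pow_of_recurrence (u := fun n ↦ u (n + N)) hba fun n ↦ by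
      simpa only [add_right_comm] using hrec (n + N) (Nat.le_add_left N n)
  have hu : Tendsto (fun n ↦ u n / a ^ n) atTop
      (𝓝 ((u (N + 1) - b * u N) / (a - b) / a ^ N)) := by
    rw [← tendsto_add_atTop_iff_nat N]
    simpa only [pow_add, div_div, add_comm 1 N, zero_add] using hshift.div_const (a ^ N)
  exact tendsto_log_div_of_tendsto_div_pow ha
    (div_ne_zero (div_ne_zero (sub_ne_zero.mpr hinit) hab) (pow_ne_zero N ha)) hu

end LogGrowth

theorem path_h_limit_general (p : ℕ → ℝ) (hinit : p 2 ≠ (3 - Real.sqrt 5) / 8 * p 1)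
    (hrec : ∀ n, 1 ≤ n → p (n + 2) = (3 / 4) * p (n + 1) - (1 / 16) * p n) :
    Tendsto (fun n : ℕ ↦ (1 / (n : ℝ)) * Real.log (p n)) atTop
      (𝓝 (Real.log ((3 + Real.sqrt 5) / 8))) := by
  have hsqrt_pos : 0 < Real.sqrt 5 := by positivity
  have hsum : (3 + Real.sqrt 5) / 8 + (3 - Real.sqrt 5) / 8 = 3 / 4 := by ring
  have hprod : (3 + Real.sqrt 5) / 8 * ((3 - Real.sqrt 5) / 8) = 1 / 16 := by
    linear_combination -(1 / 64) * Real.sq_sqrt (show (0 : ℝ) ≤ 5 by norm_num)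
  have hdominant : |(3 - Real.sqrt 5) / 8| < |(3 + Real.sqrt 5) / 8| :=
    (abs_lt.mpr ⟨by linarith, by linarith⟩).trans_le (le_abs_self _)
  refine tendsto_log_div_of_recurrence (N := 1) hdominant (fun n hn ↦ ?_) hinit
  rw [hsum, hprod, hrec n hn]

theorem path_h_limit (p : ℕ → ℝ)
    (hp1 : p 1 = 3 / 4) (hp2 : p 2 = 1 / 2)
    (hrec : ∀ n, 1 ≤ n → p (n + 2) = (3 / 4) * p (n + 1) - (1 / 16) * p n) :
    Filter.Tendsto (fun n : ℕ => (1 / (n : ℝ)) * Real.log (p n)) Filter.atTop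
      (nhds (Real.log ((3 + Real.sqrt 5) / 8))) :=
  path_h_limit_general p (by rw [hp1, hp2]; linarith [Real.sqrt_nonneg 5]) hrec
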